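/- In the setting of the sufficient-condition theorem for morphisms (injective ℂ-algebra homomorphism φ: Λ₁ → Λ₂, group homomorphism ψ: Ŵ₁ → Ŵ₂ with φ(w(a)) = ψ(w)(φ(a)), a ℂ-subspace U ⊆ Λ₂ with 1 ∈ U such that multiplication gives a ℂ-linear isomorphism φ(Λ₁) ⊗_ℂ U ≅ Λ₂), assume additionally that Ŵ₁ is finite, that Ŵ₂ is an internal direct product Ŵ₂ = ψ(Ŵ₁) × Ĥ with Ĥ finite, and that (ψ(w)·h)(φ(a)·u) = φ(w(a))·h(u) for all w ∈ Ŵ₁, h ∈ Ĥ, a ∈ Λ₁, u ∈ U (in particular h(U) ⊆ U). Let e₁ = (1/#Ŵ₁) Σ_{w∈Ŵ₁} w ∈ L₁#Ŵ₁ and e₂ = (1/#Ŵ₂) Σ_{w∈Ŵ₂} w ∈ L₂#Ŵ₂. Then the map X ↦ e₂·Φ(X)·e₂, where Φ is the induced algebra homomorphism L₁#Ŵ₁ → L₂#Ŵ₂, restricts to an injective ℂ-algebra homomorphism from the spherical subalgebra e₁·𝓕_{Λ₁}·e₁ to the spherical subalgebra e₂·𝓕_{Λ₂}·e₂. -/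

import Mathlib

/-!
Statement 2: In the setting of the sufficient-condition theorem (with `φ`, `ψ`, `U` as there,
`1 ∈ U`), if `Ŵ₁` is finite and `Ŵ₂` is an internal direct product `ψ(Ŵ₁) × Ĥ` with `Ĥ`
finite, acting by `(ψ(w)·h)(φ(a)·u) = φ(w(a))·h(u)`, then `X ↦ e₂·Φ(X)·e₂` restricts to an
injective ℂ-algebra homomorphism from the spherical subalgebra `e₁·𝓕_{Λ₁}·e₁` to the
spherical subalgebra `e₂·𝓕_{Λ₂}·e₂`, where `eᵢ = (1/#Ŵᵢ) Σ_{w ∈ Ŵᵢ} w`.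
-/

open scoped TensorProduct

noncomputable section

/-- `gen f w` is the ℂ-linear endomorphism `m_f ∘ w` of `L`. -/
def gen {L : Type*} [Field L] [Algebra ℂ L] (f : L) (w : L ≃ₐ[ℂ] L) : Module.End ℂ L :=
  (LinearMap.mulLeft ℂ f) ∘ₗ (w.toLinearMap)

/-- The skew monoid ring `L # W` realized inside `End_ℂ(L)`. -/
def skew {L : Type*} [Field L] [Algebra ℂ L] (W : Submonoid (L ≃ₐ[ℂ] L)) :
    Subalgebra ℂ (Module.End ℂ L) :=
  Algebra.adjoin ℂ { X | ∃ (f : L) (w : L ≃ₐ[ℂ] L), w ∈ W ∧ X = gen f w }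

lemma gen_mem_skew {L : Type*} [Field L] [Algebra ℂ L] {W : Submonoid (L ≃ₐ[ℂ] L)}
    (f : L) {w : L ≃ₐ[ℂ] L} (hw : w ∈ W) : gen f w ∈ skew W :=
  Algebra.subset_adjoin ⟨f, w, hw, rfl⟩

/-- The standard flag order `𝓕_Λ = {X ∈ L#W : X(Λ) ⊆ Λ}`. -/
def flag {L : Type*} [Field L] [Algebra ℂ L] (Λ : Subalgebra ℂ L)
    (W : Submonoid (L ≃ₐ[ℂ] L)) : Set (Module.End ℂ L) :=
  { X | X ∈ skew W ∧ ∀ a ∈ Λ, X a ∈ Λ }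

/-- The symmetrizing idempotent `(1/#s) Σ_{w ∈ s} w` of a finite set `s` of automorphisms. -/
def symIdem {L : Type*} [Field L] [Algebra ℂ L] (s : Finset (L ≃ₐ[ℂ] L)) : Module.End ℂ L :=
  (s.card : ℂ)⁻¹ • ∑ w ∈ s, gen (1 : L) w

lemma symIdem_mem_skew {L : Type*} [Field L] [Algebra ℂ L] {W : Submonoid (L ≃ₐ[ℂ] L)}
    {s : Finset (L ≃ₐ[ℂ] L)} (hs : ∀ w ∈ s, w ∈ W) : symIdem s ∈ skew W :=
  Subalgebra.smul_mem _ (Subalgebra.sum_mem _ fun w hw => gen_mem_skew 1 (hs w hw)) _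

/-- The multiplication map `Λ₁ ⊗_ℂ U → L₂`, `a ⊗ u ↦ φ(a)·u`. -/
def mulMap {L₁ L₂ : Type*} [Field L₁] [Algebra ℂ L₁] [Field L₂] [Algebra ℂ L₂]
    (Λ₁ : Subalgebra ℂ L₁) (U : Submodule ℂ L₂) (φ : L₁ →ₐ[ℂ] L₂) :
    (↥Λ₁ ⊗[ℂ] ↥U) →ₗ[ℂ] L₂ :=
  TensorProduct.lift
    (((LinearMap.mul ℂ L₂) ∘ₗ (φ.toLinearMap ∘ₗ Λ₁.val.toLinearMap)).compl₂ U.subtype)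

/-!
`Φ(X)` acts on `φ(L₁)·U` by `φ(x)·u ↦ φ(X x)·u`, because `ψ(Ŵ₁)` fixes `U` pointwise; in
particular it preserves `Λ₂ = φ(Λ₁)·U` as soon as `X` preserves `Λ₁`. It also commutes with `Ĥ`,
which fixes `φ(L₁)` pointwise. If `e₁ X = X`, then `Φ(X) e₂` is therefore fixed by left
multiplication with `ψ(Ŵ₁)` and with `Ĥ`, hence `e₂ Φ(X) e₂ = Φ(X) e₂`. This makes
`X ↦ e₂ Φ(X) e₂` multiplicative, and evaluating `Φ(X) e₂` at the invariant vectors `φ(e₁ x)`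
recovers `X = X e₁`.
-/

lemma inv_card_smul_sum_eq {ι K M : Type*} [DivisionSemiring K] [CharZero K] [AddCommMonoid M]
    [Module K M] {s : Finset ι} (hs : s.Nonempty) {f : ι → M} {c : M} (hf : ∀ i ∈ s, f i = c) :
    (s.card : K)⁻¹ • ∑ i ∈ s, f i = c := by
  rw [Finset.sum_eq_card_nsmul hf, ← Nat.cast_smul_eq_nsmul K,
    inv_smul_smul₀ (Nat.cast_ne_zero.2 hs.card_ne_zero)]

lemma nonempty_of_forall_mem_iff {S M : Type*} [One M] [SetLike S M] [OneMemClass S M] {W : S}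
    {s : Finset M} (hs : ∀ w, w ∈ s ↔ w ∈ W) : s.Nonempty :=
  ⟨1, (hs 1).2 (one_mem W)⟩

lemma mul_mul_mul_eq_of_mul_mul_eq {M : Type*} [Semigroup M] {e y : M} (x : M)
    (hy : e * y * e = y * e) : e * (x * y) * e = e * x * e * (e * y * e) :=
  calc e * (x * y) * e = e * x * (y * e) := by simp only [mul_assoc]
    _ = e * x * (e * y * e) := by rw [hy]
    _ = e * x * e * (y * e) := by simp only [mul_assoc]
    _ = e * x * e * (e * y * e) := by rw [hy]

/-- The pairs `(X, Y)` with `Y (φ x * u) = φ (X x) * u` for all `x` and all `u ∈ U`: on the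
multiples `φ(A)·U`, the operator `Y` acts as `X ⊗ id`. -/
def intertwiners {R A B : Type*} [CommSemiring R] [AddCommMonoid A] [Module R A] [Semiring B]
    [Algebra R B] (φ : A →ₗ[R] B) (U : Submodule R B) :
    Subalgebra R (Module.End R A × Module.End R B) where
  carrier := {p | ∀ x, ∀ u ∈ U, p.2 (φ x * u) = φ (p.1 x) * u}
  add_mem' hp hq x u hu := by simp [hp x u hu, hq x u hu, add_mul]
  mul_mem' hp hq x u hu := by simp [hp _ u hu, hq x u hu]
  algebraMap_mem' c x u _ := by simp [Module.algebraMap_end_apply]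

section SkewMonoidRing

variable {L : Type*} [Field L] [Algebra ℂ L]

lemma gen_apply (f : L) (w : L ≃ₐ[ℂ] L) (x : L) : gen f w x = f * w x := rfl

lemma gen_mul_gen (f g : L) (v w : L ≃ₐ[ℂ] L) : gen f v * gen g w = gen (f * v g) (v * w) := by
  ext x
  simp [gen_apply, mul_assoc]

lemma gen_one_mul_gen_one (v w : L ≃ₐ[ℂ] L) : gen 1 v * gen 1 w = gen (1 : L) (v * w) := by
  rw [gen_mul_gen, map_one, one_mul]

lemma commute_gen_one_gen {f : L} {h w : L ≃ₐ[ℂ] L} (hf : h f = f) (hw : Commute h w) :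
    Commute (gen 1 h) (gen f w) := by
  rw [Commute, SemiconjBy, gen_mul_gen, gen_mul_gen, hf, map_one, one_mul, mul_one, hw.eq]

lemma skew_subalgebra_eq_top_of_gen_mem {W : Submonoid (L ≃ₐ[ℂ] L)} {S : Subalgebra ℂ (skew W)}
    (hS : ∀ f w (hw : w ∈ W), ⟨gen f w, gen_mem_skew f hw⟩ ∈ S) : S = ⊤ := by
  refine top_unique (Algebra.adjoin_adjoin_coe_preimage.ge.trans (Algebra.adjoin_le ?_))
  rintro ⟨_, _⟩ ⟨f, w, hw, rfl⟩
  exact hS f w hw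

lemma mul_mem_flag {Λ : Subalgebra ℂ L} {W : Submonoid (L ≃ₐ[ℂ] L)} {X Y : Module.End ℂ L}
    (hX : X ∈ flag Λ W) (hY : Y ∈ flag Λ W) : X * Y ∈ flag Λ W :=
  ⟨mul_mem hX.1 hY.1, fun a ha => hX.2 _ (hY.2 a ha)⟩

end SkewMonoidRing

section SymIdem

variable {L : Type*} [Field L] [Algebra ℂ L] {s : Finset (L ≃ₐ[ℂ] L)}

lemma symIdem_apply (s : Finset (L ≃ₐ[ℂ] L)) (x : L) :
    symIdem s x = (s.card : ℂ)⁻¹ • ∑ w ∈ s, w x := by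
  simp [symIdem, gen_apply]

lemma symIdem_apply_of_forall_apply_eq (hs : s.Nonempty) {x : L} (hx : ∀ v ∈ s, v x = x) :
    symIdem s x = x := by
  rw [symIdem_apply, inv_card_smul_sum_eq hs hx]

lemma symIdem_mul_of_forall_gen_one_mul_eq (hs : s.Nonempty) {T : Module.End ℂ L}
    (hT : ∀ v ∈ s, gen 1 v * T = T) : symIdem s * T = T := by
  rw [symIdem, smul_mul_assoc, Finset.sum_mul, inv_card_smul_sum_eq hs hT]

lemma symIdem_mem_flag {Λ : Subalgebra ℂ L} {W : Submonoid (L ≃ₐ[ℂ] L)} (hs : ∀ w ∈ s, w ∈ W)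
    (hΛ : ∀ w ∈ s, ∀ a ∈ Λ, w a ∈ Λ) : symIdem s ∈ flag Λ W := by
  refine ⟨symIdem_mem_skew hs, fun a ha => ?_⟩
  rw [symIdem_apply]
  exact Λ.smul_mem (Λ.sum_mem fun w hw => hΛ w hw a ha) _

variable {W : Subgroup (L ≃ₐ[ℂ] L)}

lemma gen_one_mul_symIdem (hs : ∀ w, w ∈ s ↔ w ∈ W) {v : L ≃ₐ[ℂ] L} (hv : v ∈ W) :
    gen 1 v * symIdem s = symIdem s := by
  simp only [symIdem, mul_smul_comm, Finset.mul_sum, gen_one_mul_gen_one]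
  congr 1
  refine Finset.sum_bijective (v * ·) (Group.mulLeft_bijective v) (fun w => ?_) fun _ _ => rfl
  rw [hs, hs, W.mul_mem_cancel_left hv]

lemma apply_symIdem (hs : ∀ w, w ∈ s ↔ w ∈ W) {v : L ≃ₐ[ℂ] L} (hv : v ∈ W) (x : L) :
    v (symIdem s x) = symIdem s x := by
  simpa [gen_apply] using LinearMap.congr_fun (gen_one_mul_symIdem hs hv) x

lemma isIdempotentElem_symIdem (hs : ∀ w, w ∈ s ↔ w ∈ W) : IsIdempotentElem (symIdem s) :=
  symIdem_mul_of_forall_gen_one_mul_eq (nonempty_of_forall_mem_iff hs) fun v hv =>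
    gen_one_mul_symIdem hs ((hs v).1 hv)

end SymIdem

section Spherical

variable {L : Type*} [Field L] [Algebra ℂ L]

/-- The spherical subalgebra `e·𝓕_Λ·e` of the standard flag order, as a set of operators, where
`e = symIdem s`. -/
def spherical (Λ : Subalgebra ℂ L) (W : Submonoid (L ≃ₐ[ℂ] L)) (s : Finset (L ≃ₐ[ℂ] L)) :
    Set (Module.End ℂ L) :=
  {X | ∃ Z ∈ flag Λ W, X = symIdem s * Z * symIdem s}

variable {Λ : Subalgebra ℂ L} {W : Submonoid (L ≃ₐ[ℂ] L)} {s : Finset (L ≃ₐ[ℂ] L)}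

lemma spherical_subset_flag (hs : ∀ w ∈ s, w ∈ W)
    (hΛ : ∀ w ∈ s, ∀ a ∈ Λ, w a ∈ Λ) : spherical Λ W s ⊆ flag Λ W := by
  rintro _ ⟨Z, hZ, rfl⟩
  have he : symIdem s ∈ flag Λ W := symIdem_mem_flag hs hΛ
  exact mul_mem_flag (mul_mem_flag he hZ) he

variable {X : Module.End ℂ L}

lemma mul_symIdem_of_mem_spherical (he : IsIdempotentElem (symIdem s))
    (hX : X ∈ spherical Λ W s) : X * symIdem s = X := by
  obtain ⟨Z, -, rfl⟩ := hX
  rw [mul_assoc, he.eq]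

lemma symIdem_mul_of_mem_spherical (he : IsIdempotentElem (symIdem s))
    (hX : X ∈ spherical Λ W s) : symIdem s * X = X := by
  obtain ⟨Z, -, rfl⟩ := hX
  rw [← mul_assoc, ← mul_assoc, he.eq]

end Spherical

section Intertwiners

variable {L₁ L₂ : Type*} [Field L₁] [Algebra ℂ L₁] [Field L₂] [Algebra ℂ L₂]
  {φ : L₁ →ₐ[ℂ] L₂} {U : Submodule ℂ L₂}

lemma gen_mem_intertwiners {w : L₁ ≃ₐ[ℂ] L₁} {v : L₂ ≃ₐ[ℂ] L₂} (hφ : ∀ x, v (φ x) = φ (w x))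
    (hU : ∀ u ∈ U, v u = u) (f : L₁) : (gen f w, gen (φ f) v) ∈ intertwiners φ.toLinearMap U := by
  intro x u hu
  simp [gen_apply, hφ, hU u hu, mul_assoc]

lemma apply_mem_range_mulMap {Λ₁ : Subalgebra ℂ L₁} {X : Module.End ℂ L₁} {Y : Module.End ℂ L₂}
    (hXY : (X, Y) ∈ intertwiners φ.toLinearMap U) (hX : ∀ a ∈ Λ₁, X a ∈ Λ₁) {b : L₂}
    (hb : b ∈ LinearMap.range (mulMap Λ₁ U φ)) : Y b ∈ LinearMap.range (mulMap Λ₁ U φ) := by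
  obtain ⟨t, rfl⟩ := hb
  induction t with
  | zero => simp
  | tmul a u => exact ⟨⟨X a, hX a a.2⟩ ⊗ₜ u, (hXY a u u.2).symm⟩
  | add t t' ht ht' =>
    rw [map_add, map_add]
    exact add_mem ht ht'

end Intertwiners

/-- `Φ` is the homomorphism `L₁#Ŵ₁ → L₂#Ŵ₂` induced by `φ` and `ψ`, that is,
`Φ(m_f ∘ w) = m_{φ(f)} ∘ ψ(w)`. -/
def IsInducedHom {L₁ L₂ : Type*} [Field L₁] [Algebra ℂ L₁] [Field L₂] [Algebra ℂ L₂]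
    {W₁ : Subgroup (L₁ ≃ₐ[ℂ] L₁)} {W₂ : Subgroup (L₂ ≃ₐ[ℂ] L₂)} (φ : L₁ →ₐ[ℂ] L₂) (ψ : W₁ → W₂)
    (Φ : skew W₁.toSubmonoid →ₐ[ℂ] skew W₂.toSubmonoid) : Prop :=
  ∀ (f : L₁) (w : L₁ ≃ₐ[ℂ] L₁) (hw : w ∈ W₁),
    (Φ ⟨gen f w, gen_mem_skew f hw⟩ : Module.End ℂ L₂) = gen (φ f) (ψ ⟨w, hw⟩ : L₂ ≃ₐ[ℂ] L₂)

namespace IsInducedHom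

variable {L₁ L₂ : Type*} [Field L₁] [Algebra ℂ L₁] [Field L₂] [Algebra ℂ L₂]
  {W₁ : Subgroup (L₁ ≃ₐ[ℂ] L₁)} {W₂ : Subgroup (L₂ ≃ₐ[ℂ] L₂)} {φ : L₁ →ₐ[ℂ] L₂} {ψ : W₁ → W₂}
  {Φ : skew W₁.toSubmonoid →ₐ[ℂ] skew W₂.toSubmonoid}

lemma mem_intertwiners (hΦ : IsInducedHom φ ψ Φ) {U : Submodule ℂ L₂}
    (hφ : ∀ (w : W₁) x, (ψ w : L₂ ≃ₐ[ℂ] L₂) (φ x) = φ ((w : L₁ ≃ₐ[ℂ] L₁) x))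
    (hU : ∀ w, ∀ u ∈ U, (ψ w : L₂ ≃ₐ[ℂ] L₂) u = u) (X : skew W₁.toSubmonoid) :
    ((X : Module.End ℂ L₁), (Φ X : Module.End ℂ L₂)) ∈ intertwiners φ.toLinearMap U := by
  let S := (intertwiners φ.toLinearMap U).comap ((skew _).val.prod ((skew _).val.comp Φ))
  have hS : S = ⊤ := skew_subalgebra_eq_top_of_gen_mem fun f w hw => by
    change (gen f w, (Φ ⟨gen f w, gen_mem_skew f hw⟩ : Module.End ℂ L₂)) ∈
      intertwiners φ.toLinearMap U
    rw [hΦ f w hw]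
    exact gen_mem_intertwiners (hφ ⟨w, hw⟩) (hU _) f
  exact hS.ge (Algebra.mem_top (x := X))

lemma apply_map (hΦ : IsInducedHom φ ψ Φ)
    (hφ : ∀ (w : W₁) x, (ψ w : L₂ ≃ₐ[ℂ] L₂) (φ x) = φ ((w : L₁ ≃ₐ[ℂ] L₁) x))
    (X : skew W₁.toSubmonoid) (x : L₁) :
    (Φ X : Module.End ℂ L₂) (φ x) = φ ((X : Module.End ℂ L₁) x) := by
  have hU (w : W₁) (u : L₂) (hu : u ∈ ℂ ∙ (1 : L₂)) : (ψ w : L₂ ≃ₐ[ℂ] L₂) u = u := by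
    obtain ⟨c, rfl⟩ := Submodule.mem_span_singleton.1 hu
    rw [map_smul, map_one]
  simpa using hΦ.mem_intertwiners hφ hU X x 1 (Submodule.mem_span_singleton_self 1)

lemma commute_gen_one (hΦ : IsInducedHom φ ψ Φ) {h : L₂ ≃ₐ[ℂ] L₂} (hφ : ∀ x, h (φ x) = φ x)
    (hψ : ∀ w, Commute (ψ w : L₂ ≃ₐ[ℂ] L₂) h) (X : skew W₁.toSubmonoid) :
    Commute (gen 1 h) (Φ X : Module.End ℂ L₂) := by
  let S := (Subalgebra.centralizer ℂ {gen 1 h}).comap ((skew _).val.comp Φ)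
  have hS : S = ⊤ := skew_subalgebra_eq_top_of_gen_mem fun f w hw => by
    change (Φ ⟨gen f w, gen_mem_skew f hw⟩ : Module.End ℂ L₂) ∈ Subalgebra.centralizer ℂ _
    rw [hΦ f w hw, Subalgebra.mem_centralizer_iff]
    rintro _ rfl
    exact commute_gen_one_gen (hφ f) (hψ ⟨w, hw⟩).symm
  have hX : X ∈ S := hS.ge Algebra.mem_top
  exact (Subalgebra.mem_centralizer_iff ℂ).1 hX _ rfl

lemma gen_one_mul_map (hΦ : IsInducedHom φ ψ Φ) (w : W₁) {X : skew W₁.toSubmonoid}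
    (hX : gen 1 (w : L₁ ≃ₐ[ℂ] L₁) * (X : Module.End ℂ L₁) = X) :
    gen 1 (ψ w : L₂ ≃ₐ[ℂ] L₂) * (Φ X : Module.End ℂ L₂) = Φ X := by
  have hw := hΦ 1 w w.2
  rw [map_one] at hw
  rw [← hw, ← MulMemClass.coe_mul, ← map_mul]
  exact congrArg (fun T => (Φ T : Module.End ℂ L₂)) (Subtype.ext hX)

variable {s₁ : Finset (L₁ ≃ₐ[ℂ] L₁)} {s₂ : Finset (L₂ ≃ₐ[ℂ] L₂)}

lemma map_symIdem (hΦ : IsInducedHom φ ψ Φ) (hs₁ : ∀ w ∈ s₁, w ∈ W₁) :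
    (Φ ⟨symIdem s₁, symIdem_mem_skew hs₁⟩ : Module.End ℂ L₂) =
      (s₁.attach.card : ℂ)⁻¹ • ∑ w ∈ s₁.attach, gen 1 (ψ ⟨w, hs₁ w w.2⟩ : L₂ ≃ₐ[ℂ] L₂) := by
  have hsum : (⟨symIdem s₁, symIdem_mem_skew hs₁⟩ : skew W₁.toSubmonoid) =
      (s₁.attach.card : ℂ)⁻¹ • ∑ w ∈ s₁.attach, ⟨gen 1 w.1, gen_mem_skew 1 (hs₁ w w.2)⟩ := by
    refine Subtype.ext ?_
    simp [symIdem, ← Finset.sum_attach s₁]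
  rw [hsum, map_smul, map_sum, Subalgebra.coe_smul, AddSubmonoidClass.coe_finsetSum]
  congr 1
  exact Finset.sum_congr rfl fun w _ => by rw [hΦ, map_one]

lemma map_symIdem_mul_symIdem (hΦ : IsInducedHom φ ψ Φ) (hs₁ : ∀ w ∈ s₁, w ∈ W₁)
    (hne : s₁.Nonempty) (hs₂ : ∀ w, w ∈ s₂ ↔ w ∈ W₂) :
    (Φ ⟨symIdem s₁, symIdem_mem_skew hs₁⟩ : Module.End ℂ L₂) * symIdem s₂ = symIdem s₂ := by
  rw [hΦ.map_symIdem hs₁, smul_mul_assoc, Finset.sum_mul]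
  exact inv_card_smul_sum_eq hne.attach fun w _ => gen_one_mul_symIdem hs₂ (ψ _).2

variable {H : Set (L₂ ≃ₐ[ℂ] L₂)}

lemma symIdem_mul_map_mul_symIdem (hΦ : IsInducedHom φ ψ Φ) (hs₁ : ∀ w, w ∈ s₁ ↔ w ∈ W₁)
    (hs₂ : ∀ w, w ∈ s₂ ↔ w ∈ W₂) (hHφ : ∀ h ∈ H, ∀ x, h (φ x) = φ x)
    (hcomm : ∀ w, ∀ h ∈ H, Commute (ψ w : L₂ ≃ₐ[ℂ] L₂) h)
    (hgen : ∀ v ∈ W₂, ∃ w, ∃ h ∈ H, v = (ψ w : L₂ ≃ₐ[ℂ] L₂) * h) {X : skew W₁.toSubmonoid}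
    (hX : symIdem s₁ * (X : Module.End ℂ L₁) = X) :
    symIdem s₂ * (Φ X : Module.End ℂ L₂) * symIdem s₂ = Φ X * symIdem s₂ := by
  rw [mul_assoc]
  refine symIdem_mul_of_forall_gen_one_mul_eq (nonempty_of_forall_mem_iff hs₂) fun v hv => ?_
  rw [hs₂] at hv
  obtain ⟨w, h, hh, rfl⟩ := hgen v hv
  have hhW₂ : h ∈ W₂ := (W₂.mul_mem_cancel_left (ψ w).2).1 hv
  have hwX : gen 1 (w : L₁ ≃ₐ[ℂ] L₁) * (X : Module.End ℂ L₁) = X := by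
    rw [← hX, ← mul_assoc, gen_one_mul_symIdem hs₁ w.2]
  calc gen 1 ((ψ w : L₂ ≃ₐ[ℂ] L₂) * h) * (Φ X * symIdem s₂)
      = gen 1 (ψ w : L₂ ≃ₐ[ℂ] L₂) * (gen 1 h * Φ X) * symIdem s₂ := by
        simp only [← gen_one_mul_gen_one, mul_assoc]
    _ = gen 1 (ψ w : L₂ ≃ₐ[ℂ] L₂) * Φ X * (gen 1 h * symIdem s₂) := by
        rw [(hΦ.commute_gen_one (hHφ h hh) (fun w => hcomm w h hh) X).eq]
        simp only [mul_assoc]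
    _ = Φ X * symIdem s₂ := by rw [hΦ.gen_one_mul_map w hwX, gen_one_mul_symIdem hs₂ hhW₂]

lemma eq_of_map_mul_symIdem_eq (hΦ : IsInducedHom φ ψ Φ) (hs₁ : ∀ w, w ∈ s₁ ↔ w ∈ W₁)
    (hs₂ : ∀ w, w ∈ s₂ ↔ w ∈ W₂)
    (hφ : ∀ (w : W₁) x, (ψ w : L₂ ≃ₐ[ℂ] L₂) (φ x) = φ ((w : L₁ ≃ₐ[ℂ] L₁) x))
    (hHφ : ∀ h ∈ H, ∀ x, h (φ x) = φ x)
    (hgen : ∀ v ∈ W₂, ∃ w, ∃ h ∈ H, v = (ψ w : L₂ ≃ₐ[ℂ] L₂) * h) {X Y : skew W₁.toSubmonoid}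
    (hX : (X : Module.End ℂ L₁) * symIdem s₁ = X) (hY : (Y : Module.End ℂ L₁) * symIdem s₁ = Y)
    (hXY : (Φ X : Module.End ℂ L₂) * symIdem s₂ = Φ Y * symIdem s₂) : X = Y := by
  have hfix (x : L₁) : symIdem s₂ (φ (symIdem s₁ x)) = φ (symIdem s₁ x) := by
    refine symIdem_apply_of_forall_apply_eq (nonempty_of_forall_mem_iff hs₂) fun v hv => ?_
    obtain ⟨w, h, hh, rfl⟩ := hgen v ((hs₂ v).1 hv)
    rw [AlgEquiv.mul_apply, hHφ h hh, hφ, apply_symIdem hs₁ w.2]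
  have heval {T : skew W₁.toSubmonoid} (hT : (T : Module.End ℂ L₁) * symIdem s₁ = T) (x : L₁) :
      ((Φ T : Module.End ℂ L₂) * symIdem s₂) (φ (symIdem s₁ x)) =
        φ ((T : Module.End ℂ L₁) x) := by
    rw [Module.End.mul_apply, hfix, hΦ.apply_map hφ, ← Module.End.mul_apply, hT]
  refine Subtype.ext (LinearMap.ext fun x => φ.injective ?_)
  exact (heval hX x).symm.trans <|
    (LinearMap.congr_fun hXY (φ (symIdem s₁ x))).trans (heval hY x)

end IsInducedHom

theorem spherical_restriction_general
    {L₁ L₂ : Type*} [Field L₁] [Algebra ℂ L₁] [Field L₂] [Algebra ℂ L₂]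
    (Λ₁ : Subalgebra ℂ L₁) (Λ₂ : Subalgebra ℂ L₂) [IsFractionRing Λ₁ L₁]
    (W₁ : Subgroup (L₁ ≃ₐ[ℂ] L₁)) (W₂ : Subgroup (L₂ ≃ₐ[ℂ] L₂))
    (hW₁ : ∀ w ∈ W₁, ∀ a ∈ Λ₁, w a ∈ Λ₁)
    (s₁ : Finset (L₁ ≃ₐ[ℂ] L₁)) (hs₁ : ∀ w, w ∈ s₁ ↔ w ∈ W₁)
    (s₂ : Finset (L₂ ≃ₐ[ℂ] L₂)) (hs₂ : ∀ w, w ∈ s₂ ↔ w ∈ W₂)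
    (φ : L₁ →ₐ[ℂ] L₂) (ψ : W₁ → W₂)
    (hcompat : ∀ (w : W₁), ∀ a ∈ Λ₁,
      φ ((w : L₁ ≃ₐ[ℂ] L₁) a) = (ψ w : L₂ ≃ₐ[ℂ] L₂) (φ a))
    (Φ : skew W₁.toSubmonoid →ₐ[ℂ] skew W₂.toSubmonoid) (hΦ : IsInducedHom φ ψ Φ)
    (U : Submodule ℂ L₂) (hrange : LinearMap.range (mulMap Λ₁ U φ) = Λ₂.toSubmodule)
    (H : Set (L₂ ≃ₐ[ℂ] L₂)) (hcomm : ∀ w, ∀ h ∈ H, Commute (ψ w : L₂ ≃ₐ[ℂ] L₂) h)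
    (hgen : ∀ v ∈ W₂, ∃ w, ∃ h ∈ H, v = (ψ w : L₂ ≃ₐ[ℂ] L₂) * h)
    (hψU : ∀ w, ∀ u ∈ U, (ψ w : L₂ ≃ₐ[ℂ] L₂) u = u) (hHφ : ∀ h ∈ H, ∀ a ∈ Λ₁, h (φ a) = φ a) :
    (∀ X : skew W₁.toSubmonoid, (X : Module.End ℂ L₁) ∈ spherical Λ₁ W₁.toSubmonoid s₁ →
      symIdem s₂ * (Φ X : Module.End ℂ L₂) * symIdem s₂ ∈ spherical Λ₂ W₂.toSubmonoid s₂) ∧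
    (symIdem s₂ * (Φ ⟨symIdem s₁, symIdem_mem_skew fun w hw => (hs₁ w).1 hw⟩ : Module.End ℂ L₂)
      * symIdem s₂ = symIdem s₂) ∧
    (∀ X Y : skew W₁.toSubmonoid, (X : Module.End ℂ L₁) ∈ spherical Λ₁ W₁.toSubmonoid s₁ →
      (Y : Module.End ℂ L₁) ∈ spherical Λ₁ W₁.toSubmonoid s₁ →
      symIdem s₂ * (Φ (X * Y) : Module.End ℂ L₂) * symIdem s₂ =
        (symIdem s₂ * (Φ X : Module.End ℂ L₂) * symIdem s₂) *
        (symIdem s₂ * (Φ Y : Module.End ℂ L₂) * symIdem s₂)) ∧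
    (∀ X Y : skew W₁.toSubmonoid, (X : Module.End ℂ L₁) ∈ spherical Λ₁ W₁.toSubmonoid s₁ →
      (Y : Module.End ℂ L₁) ∈ spherical Λ₁ W₁.toSubmonoid s₁ →
      symIdem s₂ * (Φ X : Module.End ℂ L₂) * symIdem s₂ =
        symIdem s₂ * (Φ Y : Module.End ℂ L₂) * symIdem s₂ → X = Y) := by
  have hψL (w : W₁) (x : L₁) : (ψ w : L₂ ≃ₐ[ℂ] L₂) (φ x) = φ ((w : L₁ ≃ₐ[ℂ] L₁) x) :=
    RingHom.congr_fun (IsFractionRing.ringHom_ext (A := Λ₁)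
      (f1 := ((ψ w : L₂ ≃ₐ[ℂ] L₂) : L₂ →+* L₂).comp φ)
      (f2 := (φ : L₁ →+* L₂).comp (w : L₁ ≃ₐ[ℂ] L₁)) fun a => (hcompat w a a.2).symm) x
  have hHL (h) (hh : h ∈ H) (x : L₁) : h (φ x) = φ x :=
    RingHom.congr_fun (IsFractionRing.ringHom_ext (A := Λ₁) (f1 := (h : L₂ →+* L₂).comp φ)
      (f2 := (φ : L₁ →+* L₂)) fun a => hHφ h hh a a.2) x
  have he₁ : IsIdempotentElem (symIdem s₁) := isIdempotentElem_symIdem hs₁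
  have he₂ : IsIdempotentElem (symIdem s₂) := isIdempotentElem_symIdem hs₂
  have hs₁W (w) (hw : w ∈ s₁) : w ∈ W₁ := (hs₁ w).1 hw
  have habsorb {X : skew W₁.toSubmonoid}
      (hX : (X : Module.End ℂ L₁) ∈ spherical Λ₁ W₁.toSubmonoid s₁) :
      symIdem s₂ * (Φ X : Module.End ℂ L₂) * symIdem s₂ = Φ X * symIdem s₂ :=
    hΦ.symIdem_mul_map_mul_symIdem hs₁ hs₂ hHL hcomm hgen (symIdem_mul_of_mem_spherical he₁ hX)
  refine ⟨fun X hX => ⟨Φ X, ⟨(Φ X).2, ?_⟩, rfl⟩, ?_, fun X Y _ hY => ?_, fun X Y hX hY hXY => ?_⟩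
  · have hXΛ := (spherical_subset_flag hs₁W (fun w hw => hW₁ w (hs₁W w hw)) hX).2
    simp only [← Subalgebra.mem_toSubmodule, ← hrange]
    exact fun b => apply_mem_range_mulMap (hΦ.mem_intertwiners hψL hψU X) hXΛ
  · rw [mul_assoc, hΦ.map_symIdem_mul_symIdem hs₁W (nonempty_of_forall_mem_iff hs₁) hs₂, he₂.eq]
  · rw [map_mul, MulMemClass.coe_mul, mul_mul_mul_eq_of_mul_mul_eq _ (habsorb hY)]
  · rw [habsorb hX, habsorb hY] at hXY
    exact hΦ.eq_of_map_mul_symIdem_eq hs₁ hs₂ hψL hHL hgen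
      (mul_symIdem_of_mem_spherical he₁ hX) (mul_symIdem_of_mem_spherical he₁ hY) hXY

theorem spherical_restriction
    {L₁ L₂ : Type*} [Field L₁] [Algebra ℂ L₁] [Field L₂] [Algebra ℂ L₂]
    (Λ₁ : Subalgebra ℂ L₁) (Λ₂ : Subalgebra ℂ L₂)
    [IsFractionRing Λ₁ L₁] [IsFractionRing Λ₂ L₂]
    (W₁ : Subgroup (L₁ ≃ₐ[ℂ] L₁)) (W₂ : Subgroup (L₂ ≃ₐ[ℂ] L₂))
    (hW₁ : ∀ w ∈ W₁, ∀ x : L₁, x ∈ Λ₁ ↔ w x ∈ Λ₁)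
    (hW₂ : ∀ w ∈ W₂, ∀ x : L₂, x ∈ Λ₂ ↔ w x ∈ Λ₂)
    -- Ŵ₁ and Ŵ₂ are finite, enumerated by s₁ and s₂
    (s₁ : Finset (L₁ ≃ₐ[ℂ] L₁)) (hs₁ : ∀ w, w ∈ s₁ ↔ w ∈ W₁)
    (s₂ : Finset (L₂ ≃ₐ[ℂ] L₂)) (hs₂ : ∀ w, w ∈ s₂ ↔ w ∈ W₂)
    (φ : L₁ →ₐ[ℂ] L₂) (hφ : ∀ x ∈ Λ₁, φ x ∈ Λ₂)
    (ψ : W₁ →* W₂)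
    (hcompat : ∀ (w : W₁) (a : L₁), a ∈ Λ₁ →
      φ ((w : L₁ ≃ₐ[ℂ] L₁) a) = ((ψ w : W₂) : L₂ ≃ₐ[ℂ] L₂) (φ a))
    -- the induced algebra homomorphism Φ
    (Φ : skew W₁.toSubmonoid →ₐ[ℂ] skew W₂.toSubmonoid)
    (hΦ : ∀ (f : L₁) (w : L₁ ≃ₐ[ℂ] L₁) (hw : w ∈ W₁),
      (Φ ⟨gen f w, gen_mem_skew f hw⟩ : Module.End ℂ L₂)
        = gen (φ f) ((ψ ⟨w, hw⟩ : W₂) : L₂ ≃ₐ[ℂ] L₂))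
    -- the subspace U with Λ₂ ≅ φ(Λ₁) ⊗ U via multiplication, and 1 ∈ U
    (U : Submodule ℂ L₂) (hU : U ≤ Λ₂.toSubmodule) (hU1 : (1 : L₂) ∈ U)
    (hinj : Function.Injective (mulMap Λ₁ U φ))
    (hrange : LinearMap.range (mulMap Λ₁ U φ) = Λ₂.toSubmodule)
    -- Ŵ₂ is the internal direct product ψ(Ŵ₁) × Ĥ, with Ĥ a finite subgroup
    (H : Subgroup (L₂ ≃ₐ[ℂ] L₂)) (hHW₂ : H ≤ W₂)
    (hcomm : ∀ (w : W₁) (h : L₂ ≃ₐ[ℂ] L₂), h ∈ H →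
      Commute ((ψ w : W₂) : L₂ ≃ₐ[ℂ] L₂) h)
    (hgen : ∀ v ∈ W₂, ∃ (w : W₁) (h : L₂ ≃ₐ[ℂ] L₂), h ∈ H ∧
      v = ((ψ w : W₂) : L₂ ≃ₐ[ℂ] L₂) * h)
    (htriv : ∀ w : W₁, ((ψ w : W₂) : L₂ ≃ₐ[ℂ] L₂) ∈ H →
      ((ψ w : W₂) : L₂ ≃ₐ[ℂ] L₂) = 1)
    (hHU : ∀ h ∈ H, ∀ u ∈ U, (h : L₂ ≃ₐ[ℂ] L₂) u ∈ U)
    -- the action of Ŵ₂ = ψ(Ŵ₁) × Ĥ on the decomposition Λ₂ = φ(Λ₁) ⊗ U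
    (haction : ∀ (w : W₁) (h : L₂ ≃ₐ[ℂ] L₂), h ∈ H → ∀ a ∈ Λ₁, ∀ u ∈ U,
      (((ψ w : W₂) : L₂ ≃ₐ[ℂ] L₂) * h) (φ a * u) = φ ((w : L₁ ≃ₐ[ℂ] L₁) a) * h u) :
    -- conclusion: X ↦ e₂ Φ(X) e₂ restricts to an injective ℂ-algebra homomorphism
    -- e₁·𝓕_{Λ₁}·e₁ → e₂·𝓕_{Λ₂}·e₂
    (∀ X : skew W₁.toSubmonoid,
        (X : Module.End ℂ L₁) ∈ {y | ∃ Z ∈ flag Λ₁ W₁.toSubmonoid, y = symIdem s₁ * Z * symIdem s₁} →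
        symIdem s₂ * (Φ X : Module.End ℂ L₂) * symIdem s₂ ∈
          {y | ∃ Z ∈ flag Λ₂ W₂.toSubmonoid, y = symIdem s₂ * Z * symIdem s₂}) ∧
    (symIdem s₂ * (Φ ⟨symIdem s₁, symIdem_mem_skew fun w hw => (hs₁ w).1 hw⟩ : Module.End ℂ L₂)
        * symIdem s₂ = symIdem s₂) ∧
    (∀ X Y : skew W₁.toSubmonoid,
        (X : Module.End ℂ L₁) ∈ {y | ∃ Z ∈ flag Λ₁ W₁.toSubmonoid, y = symIdem s₁ * Z * symIdem s₁} →
        (Y : Module.End ℂ L₁) ∈ {y | ∃ Z ∈ flag Λ₁ W₁.toSubmonoid, y = symIdem s₁ * Z * symIdem s₁} →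
        symIdem s₂ * (Φ (X * Y) : Module.End ℂ L₂) * symIdem s₂ =
          (symIdem s₂ * (Φ X : Module.End ℂ L₂) * symIdem s₂) *
          (symIdem s₂ * (Φ Y : Module.End ℂ L₂) * symIdem s₂)) ∧
    (∀ X Y : skew W₁.toSubmonoid,
        (X : Module.End ℂ L₁) ∈ {y | ∃ Z ∈ flag Λ₁ W₁.toSubmonoid, y = symIdem s₁ * Z * symIdem s₁} →
        (Y : Module.End ℂ L₁) ∈ {y | ∃ Z ∈ flag Λ₁ W₁.toSubmonoid, y = symIdem s₁ * Z * symIdem s₁} →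
        symIdem s₂ * (Φ X : Module.End ℂ L₂) * symIdem s₂ =
          symIdem s₂ * (Φ Y : Module.End ℂ L₂) * symIdem s₂ → X = Y) := by
  exact spherical_restriction_general Λ₁ Λ₂ W₁ W₂ (fun w hw a => (hW₁ w hw a).1) s₁ hs₁ s₂ hs₂ φ ψ
    hcompat Φ hΦ U hrange H hcomm hgen
    (fun w u hu => by simpa using haction w 1 H.one_mem 1 Λ₁.one_mem u hu)
    (fun h hh a ha => by simpa using haction 1 h hh a ha 1 hU1)
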